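/- Let d ≥ 2 be an integer, 1/d < p < 1, and let r_{n,k} be the root-cluster weights for random increasing d-ary trees (φ(δ)=d!/(d-δ)! for 0≤δ≤d, φ(δ)=0 for δ>d). Then for every integer k ≥ 1, the normalized k-th moment of the root-cluster size satisfies lim_{n→∞} m_k(n)/n^{k(pd-1)/(d-1)} = D_k·Γ(1/(d-1))/Γ((kpd-k+1)/(d-1)), where D_k is given by the Bell-polynomial recursion. -/

import Mathlib

open Finset Filter Asymptotics

/-- The root-cluster weight recursion. -/
noncomputable def clusterRec (p : ℝ) (φ : ℕ → ℝ) (r : ℕ → ℕ → ℝ) (b : ℕ → ℝ) : Prop :=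
  (∀ m, b m = ∑ k ∈ Finset.Icc 1 m, r m k) ∧
  ∀ n k : ℕ, 1 ≤ n → 1 ≤ k →
    r n k =
      ∑ δ ∈ Finset.range n, ∑ s ∈ (Finset.range (δ + 1)).attach,
        (δ.choose s.1 : ℝ) * (φ δ / (δ.factorial : ℝ)) *
          ∑ f ∈ (Finset.Nat.antidiagonalTuple δ (n - 1)).filter (fun f => ∀ i, 1 ≤ f i),
            (((n - 1).factorial : ℝ) / ∏ i, ((f i).factorial : ℝ)) *
              ∑ g ∈ (Finset.Nat.antidiagonalTuple s.1 (k - 1)).filter (fun g => ∀ i, 1 ≤ g i),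
                p ^ s.1 * (1 - p) ^ (δ - s.1) *
                  (∏ i : Fin s.1,
                    r (f (Fin.castLE (Nat.lt_succ_iff.mp (Finset.mem_range.mp s.2)) i)) (g i)) *
                  ∏ j ∈ Finset.univ.filter (fun j : Fin δ => s.1 ≤ (j : ℕ)), b (f j)

/-- Partial Bell polynomials. -/
noncomputable def bellPartial (k j : ℕ) (x : ℕ → ℝ) : ℝ :=
  ∑ m ∈ (Fintype.piFinset (fun _ : Fin (k - j + 1) => Finset.range (k + 1))).filter
      (fun m : Fin (k - j + 1) → ℕ => (∑ i : Fin (k - j + 1), ((i : ℕ) + 1) * m i) = k ∧ (∑ i, m i) = j),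
    (k.factorial : ℝ) *
      ∏ i : Fin (k - j + 1), x ((i : ℕ) + 1) ^ m i /
        (((m i).factorial : ℝ) * (((i : ℕ) + 1).factorial : ℝ) ^ m i)

/-!
Write `R(t, v) = ∑ r n k * v ^ k * t ^ n / n!` and `B(t) = R(t, 1)`. The recursion says that
`∂R/∂t = v * (1 + p * R + (1 - p) * B) ^ d`. At `v = 1` this is solved by
`1 + B = (1 - (d - 1) * t) ^ (-α)` with `α = 1 / (d - 1)`. Put `v = exp z`, rescale `t` by `α` and
let `Y = 1 + p * R + (1 - p) * B`, so that `∂Y/∂t = p * α * exp z * Y ^ d`. The coefficient of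
`z ^ k` then satisfies a linear differential equation whose inhomogeneity involves only lower
coefficients. Since the homogeneous equation is solved by `(1 - t) ^ (-p * d * α)`, induction on
`k` shows that its coefficients in `t` grow like those of `c k * (1 - t) ^ (-(α + k * β))` with
`β = (p * d - 1) * α`. Comparing leading terms yields a convolution recursion for `c k`, and the
Bell polynomial recursion says exactly that `c k = p * D k / k!`. Dividing by the coefficients of
`(1 - t) ^ (-α)` produces the power of `n` and the quotient of Gamma values.
-/

section

open PowerSeries Topology

section BinomialRing

variable {R : Type*} [CommRing R] [BinomialRing R]

theorem succ_mul_multichoose_succ (a : R) (n : ℕ) :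
    (n + 1) * Ring.multichoose a (n + 1) = (a + n) * Ring.multichoose a n := by
  have := BinomialRing.toIsAddTorsionFree (R := R)
  refine nsmul_right_injective n.factorial_ne_zero ?_
  have h := Ring.factorial_nsmul_multichoose_eq_ascPochhammer a (n + 1)
  rw [Polynomial.ascPochhammer_smeval_eq_eval, ascPochhammer_succ_eval,
    ← Polynomial.ascPochhammer_smeval_eq_eval, ← Ring.factorial_nsmul_multichoose_eq_ascPochhammer,
    Nat.factorial_succ] at h
  simp only [nsmul_eq_mul, Nat.cast_mul, Nat.cast_add_one] at h ⊢
  linear_combination h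

theorem succ_mul_multichoose_succ' (a : R) (n : ℕ) :
    (n + 1) * Ring.multichoose a (n + 1) = a * Ring.multichoose (a + 1) n := by
  rw [succ_mul_multichoose_succ]
  induction n with
  | zero => simp
  | succ n ih =>
    have pascal := Ring.multichoose_succ_succ a n
    have h := succ_mul_multichoose_succ a n
    push_cast
    linear_combination ih + h - a * pascal

/-- The power series `(1 - X) ^ (-a)`. -/
noncomputable def negBinomialSeries (a : R) : R⟦X⟧ :=
  PowerSeries.mk (Ring.multichoose a)

@[simp]
theorem coeff_negBinomialSeries (a : R) (n : ℕ) :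
    coeff n (negBinomialSeries a) = Ring.multichoose a n :=
  coeff_mk _ _

@[simp]
theorem constantCoeff_negBinomialSeries (a : R) : constantCoeff (negBinomialSeries a) = 1 := by
  simp [← coeff_zero_eq_constantCoeff_apply]

theorem negBinomialSeries_eq_rescale (a : R) :
    negBinomialSeries a = rescale (-1) (binomialSeries R (-a)) := by
  ext n
  simp only [coeff_negBinomialSeries, Ring.multichoose_eq, coeff_rescale, binomialSeries_coeff,
    Ring.choose_neg, Units.smul_def, Int.coe_negOnePow_natCast, smul_eq_mul, mul_one, zsmul_eq_mul,
    Int.cast_pow, Int.cast_neg, Int.cast_one]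
  rw [← mul_assoc, ← mul_pow, neg_one_mul, neg_neg, one_pow, one_mul]

theorem negBinomialSeries_add (a b : R) :
    negBinomialSeries (a + b) = negBinomialSeries a * negBinomialSeries b := by
  simp only [negBinomialSeries_eq_rescale, neg_add, binomialSeries_add, map_mul]

theorem negBinomialSeries_pow (a : R) (m : ℕ) :
    negBinomialSeries a ^ m = negBinomialSeries (m * a) := by
  induction m with
  | zero => simp [negBinomialSeries_eq_rescale]
  | succ m ih => rw [pow_succ, ih, ← negBinomialSeries_add, Nat.cast_succ, add_one_mul]

theorem sum_range_multichoose_mul_multichoose (a b : R) (n : ℕ) :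
    ∑ j ∈ range (n + 1), Ring.multichoose a j * Ring.multichoose b (n - j) =
      Ring.multichoose (a + b) n := by
  rw [← coeff_negBinomialSeries (a + b), negBinomialSeries_add, coeff_mul,
    Finset.Nat.sum_antidiagonal_eq_sum_range_succ_mk]
  simp only [coeff_negBinomialSeries]

theorem derivative_negBinomialSeries (a : R) :
    d⁄dX R (negBinomialSeries a) = a • negBinomialSeries (a + 1) := by
  ext n
  simp [coeff_derivative, mul_comm _ ((n : R) + 1), succ_mul_multichoose_succ']

theorem coeff_succ_negBinomialSeries_one_mul (F : R⟦X⟧) (n : ℕ) :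
    coeff (n + 1) (negBinomialSeries 1 * F) =
      coeff n (negBinomialSeries 1 * F) + coeff (n + 1) F := by
  simp only [coeff_mul, coeff_negBinomialSeries, Ring.multichoose_one, one_mul]
  rw [Finset.Nat.sum_antidiagonal_succ, add_comm]

end BinomialRing

section Asymptotics

theorem multichoose_pos {a : ℝ} (ha : 0 < a) (n : ℕ) : 0 < Ring.multichoose a n := by
  induction n with
  | zero => simp
  | succ n ih =>
    have h : 0 < ((n : ℝ) + 1) * Ring.multichoose a (n + 1) := by
      rw [succ_mul_multichoose_succ]; positivity
    exact pos_of_mul_pos_right h (by positivity)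

theorem multichoose_eq_prod_div_factorial (a : ℝ) (n : ℕ) :
    Ring.multichoose a n = (∏ i ∈ range n, (a + i)) / n.factorial := by
  induction n with
  | zero => simp
  | succ n ih =>
    have h := succ_mul_multichoose_succ a n
    rw [ih] at h
    rw [prod_range_succ, Nat.factorial_succ]
    push_cast
    field_simp at h ⊢
    linear_combination h

theorem tendsto_multichoose_div_rpow {a : ℝ} (ha : 0 < a) :
    Tendsto (fun n : ℕ ↦ Ring.multichoose a n / (n : ℝ) ^ (a - 1)) atTop
      (𝓝 (1 / Real.Gamma a)) := by
  have h := ((Real.GammaSeq_tendsto_Gamma a).inv₀ (Real.Gamma_pos_of_pos ha).ne').mul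
    (tendsto_natCast_div_add_atTop a)
  rw [mul_one, ← one_div] at h
  refine h.congr' ?_
  filter_upwards [eventually_gt_atTop 0] with n hn
  have hn : (0 : ℝ) < n := by exact_mod_cast hn
  rw [Real.GammaSeq, multichoose_eq_prod_div_factorial, prod_range_succ, Real.rpow_sub_one hn.ne']
  have : 0 < ∏ i ∈ range n, (a + (i : ℝ)) := prod_pos fun i _ ↦ by positivity
  field_simp
  ring

theorem tendsto_multichoose_div_multichoose_div_rpow {a b : ℝ} (ha : 0 < a) (hb : 0 < b) :
    Tendsto (fun n : ℕ ↦ Ring.multichoose a n / Ring.multichoose b n / (n : ℝ) ^ (a - b)) atTop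
      (𝓝 (Real.Gamma b / Real.Gamma a)) := by
  have h := (tendsto_multichoose_div_rpow ha).div (tendsto_multichoose_div_rpow hb)
    (one_div_pos.2 (Real.Gamma_pos_of_pos hb)).ne'
  rw [one_div, one_div, inv_div_inv] at h
  refine h.congr' ?_
  filter_upwards [eventually_gt_atTop 0] with n hn
  have hn : (0 : ℝ) < n := by exact_mod_cast hn
  rw [Pi.div_apply, ← sub_sub_sub_cancel_right a b 1, Real.rpow_sub hn (a - 1), div_div_div_comm]

theorem tendsto_multichoose_div_multichoose_zero {a b : ℝ} (ha : 0 < a) (hab : a < b) :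
    Tendsto (fun n : ℕ ↦ Ring.multichoose a n / Ring.multichoose b n) atTop (𝓝 0) := by
  have h := (tendsto_multichoose_div_multichoose_div_rpow ha (ha.trans hab)).mul
    ((tendsto_rpow_neg_atTop (sub_pos.2 hab)).comp tendsto_natCast_atTop_atTop)
  rw [mul_zero] at h
  refine h.congr' ?_
  filter_upwards [eventually_gt_atTop 0] with n hn
  have : (0 : ℝ) < n := by exact_mod_cast hn
  rw [Function.comp_apply, neg_sub]
  field_simp

theorem tendsto_multichoose_div_multichoose_atTop {a b : ℝ} (ha : 0 < a) (hab : a < b) :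
    Tendsto (fun n : ℕ ↦ Ring.multichoose b n / Ring.multichoose a n) atTop atTop := by
  have h : Tendsto (fun n : ℕ ↦ Ring.multichoose a n / Ring.multichoose b n) atTop (𝓝[>] 0) :=
    tendsto_nhdsWithin_iff.2 ⟨tendsto_multichoose_div_multichoose_zero ha hab,
      .of_forall fun n ↦ div_pos (multichoose_pos ha n) (multichoose_pos (ha.trans hab) n)⟩
  simpa only [Pi.inv_def, inv_div] using h.inv_tendsto_nhdsGT_zero

theorem div_multichoose_succ_sub_div_multichoose {a x y g : ℝ} (ha : 0 < a) {n : ℕ}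
    (h : (n + 1) * y = (a + n) * x + g) :
    y / Ring.multichoose a (n + 1) - x / Ring.multichoose a n =
      g / ((n + 1) * Ring.multichoose a (n + 1)) := by
  have := multichoose_pos ha n
  have := multichoose_pos ha (n + 1)
  field_simp
  linear_combination Ring.multichoose a n * h - x * succ_mul_multichoose_succ a n

theorem multichoose_mul_multichoose_le {a b : ℝ} (ha : 0 < a) (hb : 0 < b) {j n : ℕ}
    (hj : j ≤ n) :
    Ring.multichoose a j * Ring.multichoose b (n - j) ≤ Ring.multichoose (a + b) n := by
  rw [← sum_range_multichoose_mul_multichoose]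
  exact single_le_sum (f := fun j ↦ Ring.multichoose a j * Ring.multichoose b (n - j))
    (fun i _ ↦ (mul_pos (multichoose_pos ha _) (multichoose_pos hb _)).le)
    (mem_range_succ_iff.2 hj)

theorem tendsto_multichoose_sub_div_multichoose_zero {a b : ℝ} (ha : 0 < a) (hab : a < b)
    (j : ℕ) :
    Tendsto (fun n ↦ Ring.multichoose a (n - j) / Ring.multichoose b n) atTop (𝓝 0) := by
  obtain ⟨c, hac, hcb⟩ := exists_between hab
  have pos_b (n : ℕ) := multichoose_pos (ha.trans hab) n
  have pos_sub := multichoose_pos (sub_pos.2 hac) j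
  have h := (tendsto_multichoose_div_multichoose_zero (ha.trans hac) hcb).div_const
    (Ring.multichoose (c - a) j)
  rw [zero_div] at h
  refine squeeze_zero' (.of_forall fun n ↦ (div_pos (multichoose_pos ha _) (pos_b n)).le) ?_ h
  filter_upwards [eventually_ge_atTop j] with n hn
  have hle := multichoose_mul_multichoose_le (sub_pos.2 hac) ha hn
  rw [sub_add_cancel, ← le_div_iff₀' pos_sub] at hle
  rw [div_right_comm]
  have := pos_b n
  gcongr

theorem tendsto_sum_mul_of_tendsto_cofinite_zero {ι κ : Type*} {l : Filter ι} {s : ι → Finset κ}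
    {w : ι → κ → ℝ} {x : κ → ℝ} {M : ℝ} (hrow : ∀ n, ∑ j ∈ s n, |w n j| ≤ M)
    (hcol : ∀ j, Tendsto (w · j) l (𝓝 0)) (hx : Tendsto x cofinite (𝓝 0)) :
    Tendsto (fun n ↦ ∑ j ∈ s n, w n j * x j) l (𝓝 0) := by
  classical
  refine Metric.tendsto_nhds.2 fun ε hε ↦ ?_
  obtain ⟨η, hη, hηM⟩ : ∃ η > 0, η * M < ε := by
    obtain ⟨η, hη, h⟩ := exists_pos_mul_lt hε M
    exact ⟨η, hη, by rwa [mul_comm]⟩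
  have hfin : {j | ¬ |x j| < η}.Finite := by
    simpa [Real.dist_eq] using Metric.tendsto_nhds.1 hx η hη
  set F := hfin.toFinset
  have hhead : Tendsto (fun n ↦ ∑ j ∈ F, |w n j| * |x j|) l (𝓝 0) := by
    simpa using tendsto_finsetSum F fun j _ ↦ (hcol j).abs.mul_const |x j|
  filter_upwards [hhead.eventually_lt_const (sub_pos.2 hηM)] with n hn
  rw [Real.dist_eq, sub_zero]
  have hterm : ∀ j ∈ s n, |w n j * x j| ≤ (if j ∈ F then |w n j| * |x j| else 0) + η * |w n j| := by
    intro j _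
    rw [abs_mul]
    split_ifs with hj
    · exact le_add_of_nonneg_right (by positivity)
    · have : |x j| < η := by simpa [F] using hj
      nlinarith [abs_nonneg (w n j)]
  calc |∑ j ∈ s n, w n j * x j|
      ≤ ∑ j ∈ s n, ((if j ∈ F then |w n j| * |x j| else 0) + η * |w n j|) :=
        (abs_sum_le_sum_abs _ _).trans (sum_le_sum hterm)
    _ = ∑ j ∈ s n ∩ F, |w n j| * |x j| + η * ∑ j ∈ s n, |w n j| := by
        rw [sum_add_distrib, sum_ite_mem, mul_sum]
    _ ≤ ∑ j ∈ F, |w n j| * |x j| + η * M :=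
        add_le_add (sum_le_sum_of_subset_of_nonneg inter_subset_right fun _ _ _ ↦ by positivity)
          (mul_le_mul_of_nonneg_left (hrow n) hη.le)
    _ < ε := by linarith

theorem tendsto_div_of_tendsto_sub_div_sub {x q : ℕ → ℝ} {L : ℝ} (hmono : StrictMono q)
    (hq : Tendsto q atTop atTop)
    (h : Tendsto (fun n ↦ (x (n + 1) - x n) / (q (n + 1) - q n)) atTop (𝓝 L)) :
    Tendsto (fun n ↦ x n / q n) atTop (𝓝 L) := by
  have hpos (n : ℕ) : 0 < q (n + 1) - q n := sub_pos.2 (hmono n.lt_succ_self)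
  set y : ℕ → ℝ := fun n ↦ x n - L * q n
  have hy : (fun n ↦ y (n + 1) - y n) =o[atTop] fun n ↦ q (n + 1) - q n := by
    refine (isLittleO_iff_tendsto fun n hn ↦ absurd hn (hpos n).ne').2 ?_
    rw [← sub_self L]
    refine (h.sub_const L).congr fun n ↦ ?_
    have := (hpos n).ne'
    simp only [y]
    field_simp
    ring
  have hconst (c : ℝ) : (fun _ : ℕ ↦ c) =o[atTop] q :=
    isLittleO_const_left.2 (.inr (tendsto_norm_atTop_atTop.comp hq))
  have hsum := hy.sum_range (fun n ↦ (hpos n).le) (by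
    simp only [sum_range_sub]
    exact tendsto_atTop_add_const_right _ _ hq)
  simp only [sum_range_sub] at hsum
  have hyq : y =o[atTop] q := by
    simpa using (hsum.trans_isBigO ((isBigO_refl q _).sub (hconst _).isBigO)).add (hconst (y 0))
  have := hyq.tendsto_div_nhds_zero.add_const L
  rw [zero_add] at this
  refine this.congr' ?_
  filter_upwards [hq.eventually_gt_atTop 0] with n hn
  simp only [y]
  field_simp
  ring

/-- The coefficients of `u` grow like `A` times those of `(1 - X) ^ (-a)`. -/
def HasCoeffLimit (a : ℝ) (u : ℝ⟦X⟧) (A : ℝ) : Prop :=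
  Tendsto (fun n ↦ coeff n u / Ring.multichoose a n) atTop (𝓝 A)

namespace HasCoeffLimit

variable {a b A B : ℝ} {u v : ℝ⟦X⟧}

theorem negBinomialSeries (ha : 0 < a) : HasCoeffLimit a (negBinomialSeries a) 1 :=
  tendsto_const_nhds.congr fun n ↦ by
    rw [coeff_negBinomialSeries, div_self (multichoose_pos ha n).ne']

theorem add (hu : HasCoeffLimit a u A) (hv : HasCoeffLimit a v B) :
    HasCoeffLimit a (u + v) (A + B) :=
  (Tendsto.add hu hv).congr fun n ↦ by rw [map_add, add_div]

theorem const_smul (c : ℝ) (hu : HasCoeffLimit a u A) : HasCoeffLimit a (c • u) (c * A) :=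
  (Tendsto.const_mul c hu).congr fun n ↦ by rw [coeff_smul, smul_eq_mul, mul_div_assoc]

theorem sum {ι : Type*} {s : Finset ι} {u : ι → ℝ⟦X⟧} {A : ι → ℝ}
    (h : ∀ i ∈ s, HasCoeffLimit a (u i) (A i)) : HasCoeffLimit a (∑ i ∈ s, u i) (∑ i ∈ s, A i) :=
  (tendsto_finsetSum s h).congr fun n ↦ by rw [map_sum, sum_div]

theorem zero_of_lt (ha : 0 < a) (hab : a < b) (hu : HasCoeffLimit a u A) :
    HasCoeffLimit b u 0 := by
  have := Tendsto.mul hu (tendsto_multichoose_div_multichoose_zero ha hab)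
  rw [mul_zero] at this
  exact this.congr fun n ↦ div_mul_div_cancel₀ (multichoose_pos ha n).ne'

theorem exists_abs_coeff_le (ha : 0 < a) (hu : HasCoeffLimit a u A) :
    ∃ M, ∀ n, |coeff n u| ≤ M * Ring.multichoose a n := by
  obtain ⟨M, hM⟩ := (Tendsto.abs hu).bddAbove_range
  refine ⟨M, fun n ↦ ?_⟩
  have : |coeff n u / Ring.multichoose a n| ≤ M := hM ⟨n, rfl⟩
  rwa [abs_div, abs_of_pos (multichoose_pos ha n), div_le_iff₀ (multichoose_pos ha n)] at this

theorem mul_zero_of_abs_coeff_le {M : ℝ} (ha : 0 < a) (hb : 0 < b)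
    (hu : ∀ n, |coeff n u| ≤ M * Ring.multichoose a n) (hv : HasCoeffLimit b v 0) :
    HasCoeffLimit (b + a) (v * u) 0 := by
  have pos_b (n : ℕ) := multichoose_pos hb n
  have pos_add (n : ℕ) := multichoose_pos (add_pos hb ha) n
  let w (n j : ℕ) : ℝ := Ring.multichoose b j * coeff (n - j) u / Ring.multichoose (b + a) n
  have hw (n j : ℕ) : |w n j| ≤
      M * (Ring.multichoose b j * Ring.multichoose a (n - j)) / Ring.multichoose (b + a) n := by
    rw [abs_div, abs_mul, abs_of_pos (pos_b j), abs_of_pos (pos_add n), mul_left_comm]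
    have := pos_b j
    have := pos_add n
    gcongr
    exact hu _
  have hrow (n : ℕ) : ∑ j ∈ range (n + 1), |w n j| ≤ M := by
    refine (sum_le_sum fun j _ ↦ hw n j).trans_eq ?_
    rw [← sum_div, ← mul_sum, sum_range_multichoose_mul_multichoose]
    exact mul_div_cancel_right₀ M (pos_add n).ne'
  have hcol (j : ℕ) : Tendsto (w · j) atTop (𝓝 0) := by
    have hlim := (tendsto_multichoose_sub_div_multichoose_zero ha
      (lt_add_of_pos_left a hb) j).const_mul (M * Ring.multichoose b j)
    rw [mul_zero] at hlim
    exact squeeze_zero_norm (fun n ↦ (hw n j).trans_eq (by ring)) hlim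
  have hratio : Tendsto (fun j ↦ coeff j v / Ring.multichoose b j) cofinite (𝓝 0) := by
    rwa [Nat.cofinite_eq_atTop]
  refine (tendsto_sum_mul_of_tendsto_cofinite_zero hrow hcol hratio).congr fun n ↦ ?_
  rw [coeff_mul, Nat.sum_antidiagonal_eq_sum_range_succ_mk, sum_div]
  refine sum_congr rfl fun j _ ↦ ?_
  have := (pos_b j).ne'
  simp only [w]
  field_simp

theorem sub_smul_negBinomialSeries (ha : 0 < a) (hu : HasCoeffLimit a u A) :
    HasCoeffLimit a (u - A • _root_.negBinomialSeries a) 0 := by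
  have := hu.add ((negBinomialSeries ha).const_smul (-A))
  rwa [mul_one, add_neg_cancel, neg_smul, ← sub_eq_add_neg] at this

theorem mul (ha : 0 < a) (hb : 0 < b) (hu : HasCoeffLimit a u A) (hv : HasCoeffLimit b v B) :
    HasCoeffLimit (a + b) (u * v) (A * B) := by
  obtain ⟨M, hM⟩ := hu.exists_abs_coeff_le ha
  have hWb (n : ℕ) : |coeff n (_root_.negBinomialSeries b)| ≤ 1 * Ring.multichoose b n := by
    rw [coeff_negBinomialSeries, one_mul, abs_of_pos (multichoose_pos hb n)]
  have h₁ := mul_zero_of_abs_coeff_le ha hb hM (hv.sub_smul_negBinomialSeries hb)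
  have h₂ := mul_zero_of_abs_coeff_le hb ha hWb (hu.sub_smul_negBinomialSeries ha)
  have h₃ := (negBinomialSeries (add_pos ha hb)).const_smul (A * B)
  rw [add_comm b a] at h₁
  have h := (h₁.add (h₂.const_smul B)).add h₃
  simp only [mul_zero, zero_add, mul_one] at h
  convert h using 1
  rw [negBinomialSeries_add]
  simp only [smul_eq_C_mul, map_mul]
  ring

theorem of_derivative (ha : 0 < a) (hu : HasCoeffLimit (a + 1) (d⁄dX ℝ u) A) :
    HasCoeffLimit a u (A / a) := by
  refine (tendsto_add_atTop_iff_nat 1).1 ((Tendsto.div_const hu a).congr fun n ↦ ?_)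
  have hw := succ_mul_multichoose_succ' a n
  have := multichoose_pos ha (n + 1)
  have := multichoose_pos (add_pos ha one_pos) n
  rw [coeff_derivative]
  field_simp
  linear_combination coeff (n + 1) u * hw

theorem negBinomialSeries_one_mul_of_derivative_eq {e K : ℝ} {F g : ℝ⟦X⟧} (ha : 0 < a)
    (hae : a < e) (hF : d⁄dX ℝ F = a • (_root_.negBinomialSeries 1 * F) + g)
    (hg : HasCoeffLimit (e + 1) g K) :
    HasCoeffLimit (e + 1) (_root_.negBinomialSeries 1 * F) (K / (e - a)) := by
  set S := _root_.negBinomialSeries 1 * F with hS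
  set w := Ring.multichoose (a + 1)
  set v := Ring.multichoose (e + 1)
  have ha₁ : 0 < a + 1 := by positivity
  have pos_w : ∀ n, 0 < w n := multichoose_pos ha₁
  have pos_v : ∀ n, 0 < v n := multichoose_pos (by linarith)
  have hea : 0 < e - a := sub_pos.2 hae
  have sub_S (n : ℕ) : coeff (n + 1) S / w (n + 1) - coeff n S / w n =
      coeff n g / ((n + 1) * w (n + 1)) := by
    refine div_multichoose_succ_sub_div_multichoose ha₁ ?_
    have h := congrArg (coeff n) hF
    rw [coeff_derivative, map_add, coeff_smul, smul_eq_mul] at h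
    rw [hS, coeff_succ_negBinomialSeries_one_mul, ← hS]
    linear_combination h
  have sub_v (n : ℕ) : v (n + 1) / w (n + 1) - v n / w n =
      (e - a) * v n / ((n + 1) * w (n + 1)) := by
    refine div_multichoose_succ_sub_div_multichoose ha₁ ?_
    linear_combination succ_mul_multichoose_succ (e + 1) n
  have hmono : StrictMono fun n ↦ v n / w n := strictMono_nat_of_lt_succ fun n ↦ by
    rw [← sub_pos, sub_v]
    have := pos_w (n + 1)
    have := pos_v n
    positivity
  have hlim := tendsto_div_of_tendsto_sub_div_sub (x := fun n ↦ coeff n S / w n) hmono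
    (tendsto_multichoose_div_multichoose_atTop ha₁ (by linarith))
    ((Tendsto.div_const hg (e - a)).congr fun n ↦ by
      have := pos_w (n + 1)
      have := pos_v n
      rw [sub_S, sub_v]
      change coeff n g / v n / (e - a) = _
      field_simp)
  exact hlim.congr fun n ↦ div_div_div_cancel_right₀ (pos_w n).ne' _ _

theorem of_derivative_eq {e K : ℝ} {F g : ℝ⟦X⟧} (ha : 0 < a) (hae : a < e)
    (hF : d⁄dX ℝ F = a • (_root_.negBinomialSeries 1 * F) + g)
    (hg : HasCoeffLimit (e + 1) g K) : HasCoeffLimit e F (K / (e - a)) := by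
  have hS := negBinomialSeries_one_mul_of_derivative_eq ha hae hF hg
  have h := of_derivative (ha.trans hae) (hF ▸ (hS.const_smul a).add hg)
  convert h using 1
  have := (sub_pos.2 hae).ne'
  have := (ha.trans hae).ne'
  field_simp
  ring

end HasCoeffLimit

/-- For a series `P` in `z` whose coefficients are power series in `t`: the coefficient of `z ^ i`
has coefficients growing like `coeff i c` times those of `(1 - t) ^ (-(a + i * β))`, so `c` is the
limit of `P` under the scaling `z ↦ z * (1 - t) ^ β`. -/
def HasBivariateCoeffLimit (a β : ℝ) (P : ℝ⟦X⟧⟦X⟧) (c : ℝ⟦X⟧) : Prop :=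
  ∀ i : ℕ, HasCoeffLimit (a + i * β) (coeff i P) (coeff i c)

namespace HasBivariateCoeffLimit

variable {a a' β : ℝ} {P P' : ℝ⟦X⟧⟦X⟧} {c c' : ℝ⟦X⟧}

theorem mul (hβ : 0 ≤ β) (ha : 0 < a) (ha' : 0 < a') (h : HasBivariateCoeffLimit a β P c)
    (h' : HasBivariateCoeffLimit a' β P' c') :
    HasBivariateCoeffLimit (a + a') β (P * P') (c * c') := by
  intro k
  rw [coeff_mul, coeff_mul]
  refine HasCoeffLimit.sum fun x hx ↦ ?_
  convert (h x.1).mul (by positivity) (by positivity) (h' x.2) using 1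
  rw [← mem_antidiagonal.1 hx]
  push_cast
  ring

theorem pow (hβ : 0 ≤ β) (ha : 0 < a) (h : HasBivariateCoeffLimit a β P c) {m : ℕ}
    (hm : m ≠ 0) : HasBivariateCoeffLimit (m * a) β (P ^ m) (c ^ m) := by
  rw [← Nat.one_le_iff_ne_zero] at hm
  induction m, hm using Nat.le_induction with
  | base => simpa using h
  | succ m hm ih =>
    rw [pow_succ, pow_succ, Nat.cast_succ, add_one_mul]
    have : (0 : ℝ) < m := Nat.cast_pos.2 hm
    exact ih.mul hβ (by positivity) ha h

theorem map_C_mul (E : ℝ⟦X⟧) (hβ : 0 < β) (ha : 0 < a) (h : HasBivariateCoeffLimit a β P c) :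
    HasBivariateCoeffLimit a β (map C E * P) (C (constantCoeff E) * c) := by
  intro k
  rw [coeff_mul, coeff_mul]
  refine HasCoeffLimit.sum fun x hx ↦ ?_
  rw [coeff_map, ← smul_eq_C_mul]
  have hx := mem_antidiagonal.1 hx
  rcases Nat.eq_zero_or_pos x.1 with h0 | hpos
  · rw [h0, coeff_zero_C, coeff_zero_eq_constantCoeff_apply, ← hx, h0, zero_add]
    exact (h x.2).const_smul _
  · have hlt : (x.2 : ℝ) < k := by exact_mod_cast (by omega : x.2 < k)
    rw [coeff_C, if_neg hpos.ne', zero_mul]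
    simpa using ((h x.2).const_smul (coeff x.1 E)).zero_of_lt (by positivity)
      (add_lt_add_right (mul_lt_mul_of_pos_right hlt hβ) a)

end HasBivariateCoeffLimit

end Asymptotics

theorem coeff_mul_pow_eq_coeff_mul_trunc_pow_add {R : Type*} [CommRing R] (E Y : R⟦X⟧) (d : ℕ)
    {k : ℕ} (hk : k ≠ 0) :
    coeff k (E * Y ^ d) = coeff k (E * (trunc k Y : R⟦X⟧) ^ d) +
      d * constantCoeff E * constantCoeff Y ^ (d - 1) * coeff k Y := by
  set T : R⟦X⟧ := ↑(trunc k Y)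
  set Z : R⟦X⟧ := PowerSeries.mk fun i ↦ coeff (i + k) Y
  have hY : Y = T + X ^ k * Z := (eq_X_pow_mul_shift_add_trunc k Y).trans (add_comm _ _)
  have hZ : constantCoeff Z = coeff k Y := by
    rw [← coeff_zero_eq_constantCoeff_apply, coeff_mk, zero_add]
  have hT : constantCoeff T = constantCoeff Y := by
    rw [hY]
    simp [hk]
  obtain ⟨Q, hQ⟩ := Polynomial.powAddExpansion T (X ^ k * Z) d
  have expand : E * Y ^ d =
      E * T ^ d + X ^ k * ((d : R⟦X⟧) * E * T ^ (d - 1) * Z + X ^ k * (E * Q * Z ^ 2)) := by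
    rw [hY, hQ]
    ring
  rw [expand, map_add, coeff_X_pow_mul', if_pos le_rfl, Nat.sub_self,
    coeff_zero_eq_constantCoeff_apply]
  simp [hk, hZ, hT]

theorem eq_zero_of_dvd_derivative {R : Type*} [CommRing R] [IsAddTorsionFree R] {H : R⟦X⟧}
    (h : H ∣ d⁄dX R H) (h0 : constantCoeff H = 0) : H = 0 := by
  ext n
  rw [map_zero]
  induction n using Nat.strong_induction_on with
  | _ n ih =>
    cases n with
    | zero => rwa [coeff_zero_eq_constantCoeff_apply]
    | succ n =>
      have hX : X ^ (n + 1) ∣ d⁄dX R H := (X_pow_dvd_iff.2 ih).trans h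
      have hcoeff := X_pow_dvd_iff.1 hX n n.lt_succ_self
      rw [coeff_derivative, ← Nat.cast_succ, mul_comm, ← nsmul_eq_mul] at hcoeff
      exact (nsmul_eq_zero_iff_right n.succ_ne_zero).1 hcoeff

section TriangularSystem

variable {m : ℕ} {α β q : ℝ} {E : ℝ⟦X⟧} {Y : ℝ⟦X⟧⟦X⟧}

theorem derivative_coeff_eq_add_coeff_trunc (hα : m * α = 1) (hq : (m + 1) * q = α + β)
    (hE : constantCoeff E = 1) (hY₀ : constantCoeff Y = negBinomialSeries α) {k : ℕ} (hk : k ≠ 0)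
    (hY : d⁄dX ℝ (coeff k Y) = q • coeff k (map C E * Y ^ (m + 1))) :
    d⁄dX ℝ (coeff k Y) = (α + β) • (negBinomialSeries 1 * coeff k Y) +
      q • coeff k (map C E * (trunc k Y : ℝ⟦X⟧⟦X⟧) ^ (m + 1)) := by
  have hE' : constantCoeff (map C E) = 1 := by
    rw [← coeff_zero_eq_constantCoeff_apply, coeff_map, coeff_zero_eq_constantCoeff_apply, hE,
      map_one]
  rw [hY, coeff_mul_pow_eq_coeff_mul_trunc_pow_add _ _ _ hk, hE', hY₀, Nat.add_sub_cancel,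
    negBinomialSeries_pow, hα, ← hq, smul_add, add_comm]
  simp only [smul_eq_C_mul, map_mul, map_add, map_natCast, map_one]
  push_cast
  ring

theorem coeff_one_eq_smul_sub (hα : m * α = 1) (hq : (m + 1) * q = α + β) (hβ : β ≠ 0)
    (hE : constantCoeff E = 1) (hY₀ : constantCoeff Y = negBinomialSeries α)
    (h0 : constantCoeff (coeff 1 Y) = 0)
    (hY : d⁄dX ℝ (coeff 1 Y) = q • coeff 1 (map C E * Y ^ (m + 1))) :
    coeff 1 Y = (q * coeff 1 E / β) • (negBinomialSeries (α + β) - negBinomialSeries α) := by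
  have htrunc : (trunc 1 Y : ℝ⟦X⟧⟦X⟧) = C (negBinomialSeries α) := by
    rw [trunc_one_left, Polynomial.coe_C, coeff_zero_eq_constantCoeff_apply, hY₀]
  have hforce : coeff 1 (map C E * (trunc 1 Y : ℝ⟦X⟧⟦X⟧) ^ (m + 1)) =
      coeff 1 E • negBinomialSeries (α + 1) := by
    rw [htrunc, ← map_pow, coeff_mul_C, coeff_map, negBinomialSeries_pow, smul_eq_C_mul,
      Nat.cast_succ, add_one_mul, hα, add_comm]
  have hode := derivative_coeff_eq_add_coeff_trunc hα hq hE hY₀ one_ne_zero hY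
  rw [hforce] at hode
  set κ := q * coeff 1 E / β
  set G := κ • (negBinomialSeries (α + β) - negBinomialSeries α)
  have hG : d⁄dX ℝ G = (α + β) • (negBinomialSeries 1 * G) +
      q • coeff 1 E • negBinomialSeries (α + 1) := by
    have hκ : q * coeff 1 E = κ * β := (div_mul_cancel₀ _ hβ).symm
    have hmul (x : ℝ) : negBinomialSeries 1 * negBinomialSeries x = negBinomialSeries (x + 1) := by
      rw [← negBinomialSeries_add, add_comm]
    rw [Derivation.map_smul, map_sub, derivative_negBinomialSeries, derivative_negBinomialSeries,
      smul_smul, hκ, mul_smul_comm, mul_sub, hmul, hmul]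
    simp only [smul_eq_C_mul, map_mul, map_add]
    ring
  refine sub_eq_zero.1 (eq_zero_of_dvd_derivative (Dvd.intro ((α + β) • negBinomialSeries 1) ?_) ?_)
  · rw [map_sub, hode, hG]
    simp only [smul_eq_C_mul]
    ring
  · simp [h0, G, smul_eq_C_mul]

theorem hasCoeffLimit_coeff_one (hα : m * α = 1) (hq : (m + 1) * q = α + β) (hα₀ : 0 < α)
    (hβ : 0 < β) (hE : constantCoeff E = 1) (hY₀ : constantCoeff Y = negBinomialSeries α)
    (h0 : constantCoeff (coeff 1 Y) = 0)
    (hY : d⁄dX ℝ (coeff 1 Y) = q • coeff 1 (map C E * Y ^ (m + 1))) :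
    HasCoeffLimit (α + β) (coeff 1 Y) (q * coeff 1 E / β) := by
  rw [coeff_one_eq_smul_sub hα hq hβ.ne' hE hY₀ h0 hY]
  have hlead := HasCoeffLimit.negBinomialSeries (add_pos hα₀ hβ)
  have hlower := (HasCoeffLimit.negBinomialSeries hα₀).zero_of_lt hα₀ (lt_add_of_pos_right α hβ)
  have h := (hlead.add (hlower.const_smul (-1))).const_smul (q * coeff 1 E / β)
  rwa [mul_zero, add_zero, mul_one, neg_one_smul, ← sub_eq_add_neg] at h

theorem hasBivariateCoeffLimit_trunc {k : ℕ} {a : ℝ} {c : ℝ⟦X⟧}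
    (h : ∀ i < k, HasCoeffLimit (a + i * β) (coeff i Y) (coeff i c)) :
    HasBivariateCoeffLimit a β (trunc k Y : ℝ⟦X⟧⟦X⟧) (trunc k c : ℝ⟦X⟧) := by
  intro i
  rw [Polynomial.coeff_coe, Polynomial.coeff_coe, coeff_trunc, coeff_trunc]
  split_ifs with hi
  · exact h i hi
  · exact tendsto_const_nhds.congr fun n ↦ by rw [map_zero, zero_div]

theorem hasBivariateCoeffLimit_of_derivative_eq {c : ℝ⟦X⟧} (hα : m * α = 1)
    (hq : (m + 1) * q = α + β) (hα₀ : 0 < α) (hβ : 0 < β)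
    (hE : constantCoeff E = 1) (hY₀ : constantCoeff Y = negBinomialSeries α)
    (h0 : constantCoeff (coeff 1 Y) = 0)
    (hY : ∀ k ≠ 0, d⁄dX ℝ (coeff k Y) = q • coeff k (map C E * Y ^ (m + 1)))
    (hc₀ : constantCoeff c = 1) (hc₁ : coeff 1 c = q * coeff 1 E / β)
    (hc : ∀ k ≥ 2, (α + k * β) * coeff k c = q * coeff k (c ^ (m + 1))) :
    HasBivariateCoeffLimit α β Y c := by
  intro k
  induction k using Nat.strong_induction_on with
  | _ k ih =>
  match k with
  | 0 =>
    simp only [coeff_zero_eq_constantCoeff_apply, hY₀, hc₀, Nat.cast_zero, zero_mul, add_zero]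
    exact .negBinomialSeries hα₀
  | 1 =>
    rw [hc₁, Nat.cast_one, one_mul]
    exact hasCoeffLimit_coeff_one hα hq hα₀ hβ hE hY₀ h0 (hY 1 one_ne_zero)
  | k + 2 =>
    have hk : k + 2 ≠ 0 := by omega
    have hlower := ((hasBivariateCoeffLimit_trunc ih).pow hβ.le hα₀ m.succ_ne_zero).map_C_mul E hβ
      (by positivity) (k + 2)
    rw [hE, map_one, one_mul, Nat.cast_succ, add_one_mul, hα, add_comm 1, add_right_comm] at hlower
    have hode := derivative_coeff_eq_add_coeff_trunc hα hq hE hY₀ hk (hY _ hk)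
    have hlt : α + β < α + (k + 2 : ℕ) * β := by push_cast; nlinarith [k.cast_nonneg (α := ℝ)]
    convert HasCoeffLimit.of_derivative_eq (add_pos hα₀ hβ) hlt hode (hlower.const_smul q) using 1
    have hsplit := coeff_mul_pow_eq_coeff_mul_trunc_pow_add 1 c (m + 1) hk
    rw [one_mul, one_mul, map_one, hc₀, one_pow] at hsplit
    have hck := hc (k + 2) (by omega)
    rw [eq_div_iff (sub_pos.2 hlt).ne']
    push_cast at hsplit hck ⊢
    linear_combination hck + q * hsplit + coeff (k + 2) c * hq

end TriangularSystem

section Bell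

theorem coeff_pow_eq_sum_piAntidiag {R : Type*} [CommSemiring R] (Z : R⟦X⟧) (n j : ℕ) :
    coeff n (Z ^ j) = ∑ m ∈ piAntidiag (univ : Finset (Fin (n + 1))) j with
      ∑ i : Fin (n + 1), (i : ℕ) * m i = n,
        Nat.multinomial univ m * ∏ i : Fin (n + 1), coeff (i : ℕ) Z ^ m i := by
  have htrunc : coeff n (Z ^ j) = coeff n ((trunc (n + 1) Z : R⟦X⟧) ^ j) := by
    rw [← coeff_coe_trunc_of_lt n.lt_succ_self, ← trunc_trunc_pow,
      coeff_coe_trunc_of_lt n.lt_succ_self]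
  have hsum : (trunc (n + 1) Z : R⟦X⟧) =
      ∑ i : Fin (n + 1), monomial (i : ℕ) (coeff (i : ℕ) Z) := by
    rw [trunc_apply, Nat.Ico_zero_eq_range, sum_range]
    rw [← Polynomial.coeToPowerSeries.ringHom_apply, map_sum]
    simp only [Polynomial.coeToPowerSeries.ringHom_apply, Polynomial.coe_monomial]
  rw [htrunc, hsum, sum_pow_eq_sum_piAntidiag, map_sum, sum_filter]
  refine sum_congr rfl fun m _ ↦ ?_
  simp only [monomial_pow, prod_monomial]
  rw [← nsmul_eq_mul, map_nsmul, nsmul_eq_mul, coeff_monomial, mul_ite, mul_zero]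
  simp only [mul_comm (m _), eq_comm (a := n)]

/-- The exponential generating function `∑_{i ≥ 1} x i * t ^ i / i!`, whose powers generate the
partial Bell polynomials of `x`. The value `x 0` is ignored. -/
noncomputable def bellSeries (x : ℕ → ℝ) : ℝ⟦X⟧ :=
  X * PowerSeries.mk fun i ↦ x (i + 1) / (i + 1).factorial

theorem coeff_bellSeries (x : ℕ → ℝ) {k : ℕ} (hk : k ≠ 0) :
    coeff k (bellSeries x) = x k / k.factorial := by
  obtain ⟨k, rfl⟩ := Nat.exists_eq_succ_of_ne_zero hk
  rw [bellSeries, coeff_succ_X_mul, coeff_mk]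

theorem coeff_bellSeries_pow_of_lt (x : ℕ → ℝ) {k j : ℕ} (h : k < j) :
    coeff k (bellSeries x ^ j) = 0 := by
  rw [bellSeries, mul_pow, coeff_X_pow_mul', if_neg h.not_ge]

theorem factorial_mul_bellPartial {k j : ℕ} (hjk : j ≤ k) (x : ℕ → ℝ) :
    j.factorial * bellPartial k j x = k.factorial * coeff k (bellSeries x ^ j) := by
  rw [bellSeries, mul_pow, coeff_X_pow_mul', if_pos hjk, coeff_pow_eq_sum_piAntidiag, bellPartial,
    mul_sum, mul_sum]
  have hweight (m : Fin (k - j + 1) → ℕ) :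
      ∑ i : Fin (k - j + 1), ((i : ℕ) + 1) * m i =
        ∑ i : Fin (k - j + 1), (i : ℕ) * m i + ∑ i, m i := by
    simp only [add_one_mul, sum_add_distrib]
  refine sum_congr ?_ fun m hm ↦ ?_
  · ext m
    simp only [mem_filter, Fintype.mem_piFinset, mem_range, mem_piAntidiag, hweight]
    constructor
    · rintro ⟨_, hk, hj⟩
      exact ⟨⟨hj, fun _ _ ↦ mem_univ _⟩, by omega⟩
    · rintro ⟨⟨hj, _⟩, hk⟩
      have hj : ∑ i, m i = j := hj
      refine ⟨fun i ↦ ?_, by omega, hj⟩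
      have := single_le_sum (f := m) (fun _ _ ↦ Nat.zero_le _) (mem_univ i)
      omega
  · have hmultinomial := Nat.multinomial_spec univ m
    rw [(mem_piAntidiag.1 (mem_filter.1 hm).1).1] at hmultinomial
    have hprod : (∏ i, ((m i).factorial : ℝ)) ≠ 0 :=
      prod_ne_zero_iff.2 fun i _ ↦ by positivity
    rw [← hmultinomial]
    simp only [coeff_mk, div_pow, ← div_div, prod_div_distrib]
    push_cast
    field_simp

theorem coeff_one_add_smul_bellSeries_pow (x : ℕ → ℝ) (p : ℝ) {d k : ℕ} (hd : d ≠ 0)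
    (hk : 2 ≤ k) :
    k.factorial * coeff k ((1 + p • bellSeries x) ^ d) = d * p * x k +
      ∑ j ∈ Icc 2 (min k d),
        p ^ j * ((d.factorial : ℝ) / (d - j).factorial) * bellPartial k j x := by
  let f (j : ℕ) : ℝ := k.factorial * (d.choose j * p ^ j * coeff k (bellSeries x ^ j))
  have hbinom : k.factorial * coeff k ((1 + p • bellSeries x) ^ d) = ∑ j ∈ range (d + 1), f j := by
    rw [add_comm, add_pow, map_sum, mul_sum]
    refine sum_congr rfl fun j _ ↦ ?_
    rw [one_pow, mul_one, smul_pow, smul_mul_assoc, coeff_smul, ← nsmul_eq_mul', map_nsmul,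
      nsmul_eq_mul, smul_eq_mul]
    ring
  have hsupport : ∑ j ∈ range (d + 1), f j = ∑ j ∈ insert 1 (Icc 2 (min k d)), f j := by
    refine (sum_subset (fun j ↦ ?_) fun j hj hj' ↦ ?_).symm
    · simp only [mem_insert, mem_Icc, mem_range]
      omega
    · simp only [mem_insert, mem_Icc, mem_range] at hj hj'
      obtain rfl | hkj : j = 0 ∨ k < j := by omega
      · simp [f, coeff_one, show k ≠ 0 by omega]
      · simp [f, coeff_bellSeries_pow_of_lt x hkj]
  rw [hbinom, hsupport, sum_insert (by simp)]
  congr 1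
  · have := k.factorial_ne_zero
    simp only [f, Nat.choose_one_right, pow_one, coeff_bellSeries x (by omega : k ≠ 0)]
    field_simp
  · refine sum_congr rfl fun j hj ↦ ?_
    obtain ⟨-, hjk, hjd⟩ : 2 ≤ j ∧ j ≤ k ∧ j ≤ d := by simpa using hj
    have hbell := factorial_mul_bellPartial hjk x
    simp only [f, Nat.cast_choose ℝ hjd]
    have := j.factorial_ne_zero
    field_simp
    linear_combination -p ^ j * hbell

end Bell

section Recursion

theorem coeff_prod_eq_sum_antidiagonalTuple {R : Type*} [CommSemiring R] {δ : ℕ}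
    (P : Fin δ → R⟦X⟧) (n : ℕ) :
    coeff n (∏ i, P i) =
      ∑ f ∈ Finset.Nat.antidiagonalTuple δ n, ∏ i, coeff (f i) (P i) := by
  rw [coeff_prod]
  refine sum_equiv Finsupp.equivFunOnFinite (fun f ↦ ?_) fun f _ ↦ rfl
  simp [mem_finsuppAntidiag, Finset.Nat.mem_antidiagonalTuple]

theorem coeff_prod_eq_sum_antidiagonalTuple_of_constantCoeff_eq_zero {R : Type*} [CommSemiring R]
    {δ : ℕ} {P : Fin δ → R⟦X⟧} (hP : ∀ i, constantCoeff (P i) = 0) (n : ℕ) :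
    coeff n (∏ i, P i) =
      ∑ f ∈ Finset.Nat.antidiagonalTuple δ n with ∀ i, 1 ≤ f i, ∏ i, coeff (f i) (P i) := by
  rw [coeff_prod_eq_sum_antidiagonalTuple]
  refine (sum_filter_of_ne fun f _ hf i ↦ Nat.one_le_iff_ne_zero.2 fun hi ↦ hf ?_).symm
  refine prod_eq_zero (mem_univ i) ?_
  rw [hi, coeff_zero_eq_constantCoeff_apply, hP]

variable {A : Type*} [CommRing A] [Algebra ℝ A] {p : ℝ} {φ : ℕ → ℝ} {r : ℕ → ℕ → ℝ} {b : ℕ → ℝ}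
  {e : A}

/-- The polynomial `∑_{j = 1}^n r n j * e ^ j` that records the size of the root cluster among
trees with `n` vertices, evaluated at an element `e` of a commutative algebra. -/
def clusterPoly (r : ℕ → ℕ → ℝ) (e : A) (n : ℕ) : A :=
  ∑ j ∈ Icc 1 n, r n j • e ^ j

/-- The bivariate exponential generating function `∑_n (∑_j r n j * e ^ j) * t ^ n / n!` of
trees, counted by number of vertices and size of the root cluster. -/
noncomputable def clusterEGF (r : ℕ → ℕ → ℝ) (e : A) : A⟦X⟧ :=
  PowerSeries.mk fun n ↦ ((n.factorial : ℝ)⁻¹) • clusterPoly r e n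

/-- The exponential generating function `∑_n b n * t ^ n / n!` of all trees, with coefficients
in a real algebra. -/
noncomputable def totalEGF (A : Type*) [CommRing A] [Algebra ℝ A] (b : ℕ → ℝ) : A⟦X⟧ :=
  PowerSeries.mk fun n ↦ algebraMap ℝ A ((n.factorial : ℝ)⁻¹ * b n)

/-- The exponential generating function coefficient (the `n!` being divided out) of ordered
forests of `s + m` trees with `n` vertices in total, in which the root clusters of the first `s`
trees have `k` vertices in total. -/
noncomputable def forestWeight (r : ℕ → ℕ → ℝ) (b : ℕ → ℝ) (s m n k : ℕ) : ℝ :=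
  ∑ f ∈ Finset.Nat.antidiagonalTuple (s + m) n with ∀ i, 1 ≤ f i,
    (∏ i, ((f i).factorial : ℝ))⁻¹ * (∏ j, b (f (Fin.natAdd s j))) *
      ∑ g ∈ Finset.Nat.antidiagonalTuple s k with ∀ i, 1 ≤ g i,
        ∏ i, r (f (Fin.castAdd m i)) (g i)

/-- The degree weights `d! / (d - δ)!` of increasing `d`-ary trees, which vanish for `δ > d`. -/
noncomputable def daryWeight (d δ : ℕ) : ℝ :=
  if δ ≤ d then (d.factorial : ℝ) / (d - δ).factorial else 0

theorem daryWeight_div_factorial (d δ : ℕ) : daryWeight d δ / δ.factorial = d.choose δ := by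
  rw [daryWeight]
  split_ifs with hδ
  · rw [Nat.cast_choose ℝ hδ, div_div, mul_comm]
  · rw [Nat.choose_eq_zero_of_lt (by omega), Nat.cast_zero, zero_div]

theorem constantCoeff_clusterEGF : constantCoeff (clusterEGF r e) = 0 := by
  rw [← coeff_zero_eq_constantCoeff_apply]
  simp [clusterEGF, clusterPoly]

theorem constantCoeff_totalEGF (hb : b 0 = 0) : constantCoeff (totalEGF A b) = 0 := by
  rw [← coeff_zero_eq_constantCoeff_apply]
  simp [totalEGF, hb]

theorem prod_clusterPoly (hr : ∀ n k, 1 ≤ n → n < k → r n k = 0) {s N : ℕ} {f : Fin s → ℕ}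
    (hf : ∀ i, 1 ≤ f i) (hN : ∑ i, f i ≤ N) :
    ∏ i, clusterPoly r e (f i) = ∑ k ∈ range (N + 1),
      (∑ g ∈ Finset.Nat.antidiagonalTuple s k with ∀ i, 1 ≤ g i, ∏ i, r (f i) (g i)) • e ^ k := by
  have hmaps : ∀ g ∈ Fintype.piFinset fun i ↦ Icc 1 (f i), ∑ i, g i ∈ range (N + 1) := by
    intro g hg
    simp only [Fintype.mem_piFinset, mem_Icc] at hg
    exact mem_range.2 (Nat.lt_succ_of_le ((sum_le_sum fun i _ ↦ (hg i).2).trans hN))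
  simp only [clusterPoly]
  rw [prod_univ_sum, ← sum_fiberwise_of_maps_to hmaps]
  refine sum_congr rfl fun k _ ↦ ?_
  rw [sum_smul]
  refine sum_subset_zero_on_sdiff (fun g ↦ ?_) (fun g hg ↦ ?_) fun g hg ↦ ?_
  · intro hg
    simp only [mem_filter, Fintype.mem_piFinset, mem_Icc, Finset.Nat.mem_antidiagonalTuple] at hg ⊢
    exact ⟨hg.2, fun i ↦ (hg.1 i).1⟩
  · simp only [Finset.mem_sdiff, mem_filter, Fintype.mem_piFinset, mem_Icc,
      Finset.Nat.mem_antidiagonalTuple] at hg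
    obtain ⟨i, hi⟩ : ∃ i, f i < g i := by
      by_contra! hle
      exact hg.2 ⟨fun i ↦ ⟨hg.1.2 i, hle i⟩, hg.1.1⟩
    rw [prod_eq_zero (mem_univ i) (hr _ _ (hf i) hi), zero_smul]
  · rw [prod_smul, prod_pow_eq_pow_sum, (mem_filter.1 hg).2]

theorem sum_forestWeight_smul_pow (hr : ∀ n k, 1 ≤ n → n < k → r n k = 0) (hb : b 0 = 0)
    (s m n : ℕ) :
    ∑ k ∈ range (n + 1), forestWeight r b s m n k • e ^ k =
      coeff n (clusterEGF r e ^ s * totalEGF A b ^ m) := by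
  let P : Fin (s + m) → A⟦X⟧ := Fin.append (fun _ ↦ clusterEGF r e) fun _ ↦ totalEGF A b
  have hprod : clusterEGF r e ^ s * totalEGF A b ^ m = ∏ i, P i := by
    simp only [P, Fin.prod_univ_add, Fin.append_left, Fin.append_right, prod_const, card_univ,
      Fintype.card_fin]
  have hP (i : Fin (s + m)) : constantCoeff (P i) = 0 := by
    cases i using Fin.addCases with
    | left i => simp only [P, Fin.append_left, constantCoeff_clusterEGF]
    | right i => simp only [P, Fin.append_right, constantCoeff_totalEGF hb]
  rw [hprod, coeff_prod_eq_sum_antidiagonalTuple_of_constantCoeff_eq_zero hP]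
  simp only [forestWeight, sum_smul]
  rw [Finset.sum_comm]
  refine sum_congr rfl fun f hf ↦ ?_
  obtain ⟨hsum, hpos⟩ := mem_filter.1 hf
  rw [Finset.Nat.mem_antidiagonalTuple, Fin.sum_univ_add] at hsum
  simp only [mul_smul, ← smul_sum (s := range (n + 1))]
  rw [← prod_clusterPoly hr (fun i ↦ hpos _) (by omega), Fin.prod_univ_add, Fin.prod_univ_add]
  simp only [P, Fin.append_left, Fin.append_right, clusterEGF, totalEGF, coeff_mk, prod_smul,
    Algebra.algebraMap_eq_smul_one, prod_mul_distrib, prod_inv_distrib, prod_const_one]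
  simp only [mul_smul_comm, mul_one, smul_smul]
  congr 1
  ring

theorem coeff_derivative_clusterEGF (r : ℕ → ℕ → ℝ) (e : A) (n : ℕ) :
    coeff n (d⁄dX A (clusterEGF r e)) =
      e * ∑ k ∈ range (n + 1), ((n.factorial : ℝ)⁻¹ * r (n + 1) (k + 1)) • e ^ k := by
  have hcast : ((n : A) + 1) = algebraMap ℝ A (n + 1) := by simp
  rw [coeff_derivative, clusterEGF, coeff_mk, clusterPoly, hcast, mul_comm, ← Algebra.smul_def,
    smul_smul, ← Ico_add_one_right_eq_Icc, sum_Ico_eq_sum_range, smul_sum, mul_sum]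
  refine sum_congr rfl fun k _ ↦ ?_
  rw [smul_smul, add_comm 1 k, pow_succ', mul_smul_comm]
  congr 2
  rw [Nat.factorial_succ]
  push_cast
  field_simp

namespace clusterRec

theorem total_zero (h : clusterRec p φ r b) : b 0 = 0 := by
  simp [h.1]

theorem eq_zero_of_lt (h : clusterRec p φ r b) : ∀ n k, 1 ≤ n → n < k → r n k = 0 := by
  intro n
  induction n using Nat.strong_induction_on with
  | _ n ih =>
  intro k hn hk
  rw [h.2 n k hn (by omega)]
  refine sum_eq_zero fun δ _ ↦ sum_eq_zero fun ⟨s, hs⟩ _ ↦ mul_eq_zero_of_right _ <|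
    sum_eq_zero fun f hf ↦ mul_eq_zero_of_right _ <| sum_eq_zero fun g hg ↦ ?_
  obtain ⟨m, rfl⟩ : ∃ m, δ = s + m := Nat.exists_eq_add_of_le (Nat.lt_succ_iff.1 (mem_range.1 hs))
  simp only [mem_filter, Finset.Nat.mem_antidiagonalTuple] at hf hg
  have hf_sum := hf.1
  rw [Fin.sum_univ_add] at hf_sum
  obtain ⟨i, hi⟩ : ∃ i : Fin s, f (Fin.castAdd m i) < g i := by
    by_contra! hle
    have := sum_le_sum (s := univ) fun i _ ↦ hle i
    omega
  have hfi := single_le_sum (f := fun i ↦ f (Fin.castAdd m i)) (fun _ _ ↦ Nat.zero_le _)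
    (mem_univ i)
  have hri : r (f (Fin.castAdd m i)) (g i) = 0 := ih _ (by omega) _ (hf.2 _) hi
  exact mul_eq_zero_of_left (mul_eq_zero_of_right _ (prod_eq_zero (mem_univ i) hri)) _

theorem eq_sum_forestWeight (h : clusterRec p φ r b) (n k : ℕ) :
    (n.factorial : ℝ)⁻¹ * r (n + 1) (k + 1) =
      ∑ δ ∈ range (n + 1), φ δ / δ.factorial *
        ∑ s ∈ range (δ + 1), δ.choose s * (p ^ s * (1 - p) ^ (δ - s)) *
          forestWeight r b s (δ - s) n k := by
  rw [h.2 (n + 1) (k + 1) (by omega) (by omega), mul_sum]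
  refine sum_congr rfl fun δ _ ↦ ?_
  rw [← sum_attach (range (δ + 1)), mul_sum, mul_sum]
  refine sum_congr rfl fun ⟨s, hs⟩ _ ↦ ?_
  obtain ⟨m, rfl⟩ : ∃ m, δ = s + m := Nat.exists_eq_add_of_le (Nat.lt_succ_iff.1 (mem_range.1 hs))
  have htail (f : Fin (s + m) → ℕ) :
      ∏ j : Fin (s + m) with s ≤ j.val, b (f j) = ∏ j, b (f (Fin.natAdd s j)) := by
    rw [prod_filter, Fin.prod_univ_add, prod_eq_one, one_mul]
    · simp
    · simp
  have := n.factorial_ne_zero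
  simp only [Nat.add_sub_cancel_left, Nat.add_sub_cancel]
  simp only [forestWeight, mul_sum, htail]
  refine sum_congr rfl fun f _ ↦ sum_congr rfl fun g _ ↦ ?_
  simp only [Fin.castAdd]
  field_simp

theorem coeff_derivative_clusterEGF (h : clusterRec p φ r b) (n : ℕ) :
    coeff n (d⁄dX A (clusterEGF r e)) = e * ∑ δ ∈ range (n + 1), (φ δ / δ.factorial) •
      coeff n ((p • clusterEGF r e + (1 - p) • totalEGF A b) ^ δ) := by
  rw [_root_.coeff_derivative_clusterEGF]
  congr 1
  simp only [h.eq_sum_forestWeight, sum_smul, mul_smul]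
  rw [Finset.sum_comm]
  refine sum_congr rfl fun δ _ ↦ ?_
  rw [← smul_sum, Finset.sum_comm, add_pow, map_sum]
  congr 1
  refine sum_congr rfl fun s _ ↦ ?_
  simp only [← smul_sum]
  rw [sum_forestWeight_smul_pow h.eq_zero_of_lt h.total_zero, smul_pow, smul_pow,
    smul_mul_smul_comm, smul_mul_assoc, coeff_smul, ← nsmul_eq_mul', map_nsmul, ← mul_smul (p ^ s),
    Nat.cast_smul_eq_nsmul, smul_comm]

theorem derivative_clusterEGF {d : ℕ} (h : clusterRec p (daryWeight d) r b) :
    d⁄dX A (clusterEGF r e) =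
      C e * (1 + p • clusterEGF r e + (1 - p) • totalEGF A b) ^ d := by
  set T := p • clusterEGF r e + (1 - p) • totalEGF A b with hT
  have hXT : X ∣ T := by
    rw [X_dvd_iff, hT]
    simp [constantCoeff_clusterEGF, constantCoeff_totalEGF h.total_zero]
  ext n
  have hsupport {δ : ℕ} (hδ : δ ∉ range (n + 1)) : d.choose δ • coeff n (T ^ δ) = 0 := by
    rw [X_pow_dvd_iff.1 (pow_dvd_pow_of_dvd hXT δ) n (by simpa using hδ), smul_zero]
  rw [coeff_derivative_clusterEGF h, coeff_C_mul, add_assoc, ← hT, add_comm 1, add_pow, map_sum]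
  congr 1
  trans ∑ δ ∈ range (d + 1) ∩ range (n + 1), d.choose δ • coeff n (T ^ δ)
  · refine (sum_congr rfl fun δ _ ↦ by rw [daryWeight_div_factorial, Nat.cast_smul_eq_nsmul]).trans
      (sum_subset inter_subset_right fun δ hδ hδ' ↦ ?_).symm
    rw [Nat.choose_eq_zero_of_lt (by simp_all), zero_smul]
  · refine (sum_subset inter_subset_left fun δ hδ hδ' ↦ hsupport ?_).trans
      (sum_congr rfl fun δ _ ↦ ?_)
    · simp_all
    · rw [one_pow, mul_one, ← nsmul_eq_mul', map_nsmul]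

end clusterRec

end Recursion

section SwapVariables

/-- The ring homomorphism that exchanges the two variables of a bivariate power series. -/
noncomputable def swapVariables (R : Type*) [CommSemiring R] : R⟦X⟧⟦X⟧ →+* R⟦X⟧⟦X⟧ where
  toFun P := PowerSeries.mk fun k ↦ PowerSeries.mk fun n ↦ coeff k (coeff n P)
  map_zero' := by ext; simp
  map_one' := by
    ext k n
    simp only [coeff_mk, coeff_one]
    split_ifs <;> simp_all [coeff_one]
  map_add' P Q := by ext; simp
  map_mul' P Q := by
    ext k n
    simp only [coeff_mk, coeff_mul, map_sum]
    exact Finset.sum_comm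

variable {R : Type*} [CommSemiring R]

theorem coeff_coeff_swapVariables (P : R⟦X⟧⟦X⟧) (k n : ℕ) :
    coeff n (coeff k (swapVariables R P)) = coeff k (coeff n P) := by
  simp [swapVariables]

theorem swapVariables_C (u : R⟦X⟧) : swapVariables R (C u) = map C u := by
  ext k n
  rw [coeff_coeff_swapVariables, coeff_map, coeff_C, coeff_C]
  split_ifs <;> simp

theorem derivative_coeff_swapVariables (P : R⟦X⟧⟦X⟧) (k : ℕ) :
    d⁄dX R (coeff k (swapVariables R P)) = coeff k (swapVariables R (d⁄dX R⟦X⟧ P)) := by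
  ext n
  rw [coeff_derivative, coeff_coeff_swapVariables, coeff_coeff_swapVariables, coeff_derivative,
    ← Nat.cast_succ, ← Nat.cast_succ, ← nsmul_eq_mul', ← nsmul_eq_mul', map_nsmul]

theorem derivative_rescale (a : R) (u : R⟦X⟧) :
    d⁄dX R (rescale a u) = a • rescale a (d⁄dX R u) := by
  ext n
  simp only [coeff_derivative, coeff_rescale, coeff_smul, smul_eq_mul]
  ring

theorem rescale_C (a c : R) : rescale a (C c) = C c := by
  ext n
  rw [coeff_rescale, coeff_C]
  split_ifs with hn <;> simp [hn]

end SwapVariables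

section MomentSeries

variable {p α : ℝ} {φ : ℕ → ℝ} {r : ℕ → ℕ → ℝ} {b : ℕ → ℝ} {d : ℕ}

/-- The generating function of the moments of the root-cluster size: the coefficient of `z ^ k`
is `∑_n (∑_j j ^ k * r n j / k!) * (α * t) ^ n / n!`. It is the bivariate generating function of
clusters at `v = exp z`, with `t` rescaled by `α`. -/
noncomputable def momentSeries (α : ℝ) (r : ℕ → ℕ → ℝ) : ℝ⟦X⟧⟦X⟧ :=
  map (rescale α) (swapVariables ℝ (clusterEGF r (exp ℝ)))

/-- The generating function `1 + p * M + (1 - p) * B` of a possibly empty broadcast subtree: `M`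
is the moment generating function of a subtree that continues the root cluster and `B` the
generating function of a subtree that does not. The variable `t` is rescaled by `α`. -/
noncomputable def subtreeSeries (p α : ℝ) (r : ℕ → ℕ → ℝ) (b : ℕ → ℝ) : ℝ⟦X⟧⟦X⟧ :=
  1 + p • momentSeries α r + (1 - p) • C (rescale α (totalEGF ℝ b))

theorem coeff_coeff_momentSeries (α : ℝ) (r : ℕ → ℕ → ℝ) (k n : ℕ) :
    coeff n (coeff k (momentSeries α r)) =
      α ^ n / n.factorial * ((∑ j ∈ Icc 1 n, (j : ℝ) ^ k * r n j) / k.factorial) := by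
  rw [momentSeries, coeff_map, coeff_rescale, coeff_coeff_swapVariables, clusterEGF, coeff_mk,
    clusterPoly, coeff_smul, map_sum, sum_div, div_eq_mul_inv, smul_eq_mul, mul_assoc]
  congr 2
  refine sum_congr rfl fun j _ ↦ ?_
  rw [coeff_smul, exp_pow_eq_rescale_exp, coeff_rescale, coeff_exp, smul_eq_mul]
  push_cast
  ring

theorem subtreeSeries_eq_map_swapVariables (p α : ℝ) (r : ℕ → ℕ → ℝ) (b : ℕ → ℝ) :
    subtreeSeries p α r b = map (rescale α)
      (swapVariables ℝ (1 + p • clusterEGF r (exp ℝ) + (1 - p) • totalEGF ℝ⟦X⟧ b)) := by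
  have hB : map (rescale α) (swapVariables ℝ (totalEGF ℝ⟦X⟧ b)) = C (rescale α (totalEGF ℝ b)) := by
    ext k n
    simp only [totalEGF, coeff_map, coeff_rescale, coeff_coeff_swapVariables, coeff_mk,
      coeff_C, PowerSeries.algebraMap_apply, Algebra.algebraMap_self_apply]
    split_ifs <;> simp
  have hsmul (a : ℝ) (P : ℝ⟦X⟧⟦X⟧) : map (rescale α) (swapVariables ℝ (a • P)) =
      a • map (rescale α) (swapVariables ℝ P) := by
    ext k n
    simp only [coeff_map, coeff_rescale, coeff_coeff_swapVariables, coeff_smul, smul_eq_mul]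
    ring
  rw [subtreeSeries, momentSeries, map_add, map_add, map_add, map_add, map_one, map_one, hsmul,
    hsmul, hB]

theorem coeff_subtreeSeries (p α : ℝ) (r : ℕ → ℕ → ℝ) (b : ℕ → ℝ) {k : ℕ} (hk : k ≠ 0) :
    coeff k (subtreeSeries p α r b) = p • coeff k (momentSeries α r) := by
  simp [subtreeSeries, coeff_C, coeff_one, hk]

namespace clusterRec

theorem constantCoeff_momentSeries (h : clusterRec p φ r b) (α : ℝ) :
    constantCoeff (momentSeries α r) = rescale α (totalEGF ℝ b) := by
  ext n
  rw [← coeff_zero_eq_constantCoeff_apply, coeff_coeff_momentSeries, coeff_rescale, totalEGF,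
    coeff_mk, h.1]
  simp only [pow_zero, one_mul, Nat.factorial_zero, Nat.cast_one, div_one,
    Algebra.algebraMap_self_apply]
  ring

theorem constantCoeff_subtreeSeries_eq (h : clusterRec p φ r b) (α : ℝ) :
    constantCoeff (subtreeSeries p α r b) = 1 + rescale α (totalEGF ℝ b) := by
  rw [subtreeSeries, map_add, map_add, map_one, constantCoeff_smul, constantCoeff_smul,
    h.constantCoeff_momentSeries, constantCoeff_C, add_assoc, ← add_smul, add_sub_cancel, one_smul]

theorem derivative_coeff_momentSeries (h : clusterRec p (daryWeight d) r b) (α : ℝ) (k : ℕ) :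
    d⁄dX ℝ (coeff k (momentSeries α r)) =
      α • coeff k (map C (exp ℝ) * subtreeSeries p α r b ^ d) := by
  have hC : map (rescale α) (map C (exp ℝ)) = map C (exp ℝ) := by
    ext1 k
    simp only [coeff_map, rescale_C]
  rw [momentSeries, coeff_map, derivative_rescale, derivative_coeff_swapVariables,
    h.derivative_clusterEGF, map_mul, map_pow, swapVariables_C, ← coeff_map, map_mul, map_pow, hC,
    subtreeSeries_eq_map_swapVariables]

theorem constantCoeff_subtreeSeries (h : clusterRec p (daryWeight d) r b)
    (hα : (d - 1) * α = 1) : constantCoeff (subtreeSeries p α r b) = negBinomialSeries α := by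
  have hdα : d * α = α + 1 := by linear_combination hα
  have hE : constantCoeff (map C (exp ℝ)) = (1 : ℝ⟦X⟧) := by
    rw [← coeff_zero_eq_constantCoeff_apply, coeff_map, coeff_zero_eq_constantCoeff_apply,
      constantCoeff_exp, map_one]
  have hode : d⁄dX ℝ (rescale α (totalEGF ℝ b)) =
      α • constantCoeff (subtreeSeries p α r b) ^ d := by
    rw [← h.constantCoeff_momentSeries, ← coeff_zero_eq_constantCoeff_apply,
      h.derivative_coeff_momentSeries, coeff_zero_eq_constantCoeff_apply, map_mul, map_pow, hE,
      one_mul]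
  refine sub_eq_zero.1 (eq_zero_of_dvd_derivative ?_ ?_)
  · have hY := congrArg (d⁄dX ℝ) (h.constantCoeff_subtreeSeries_eq α)
    rw [map_add, Derivation.map_one_eq_zero, zero_add, hode] at hY
    rw [map_sub, hY, derivative_negBinomialSeries, ← hdα, ← negBinomialSeries_pow, ← smul_sub,
      smul_eq_C_mul]
    exact (sub_dvd_pow_sub_pow _ _ d).mul_left _
  · rw [h.constantCoeff_subtreeSeries_eq, map_sub, map_add, map_one,
      constantCoeff_negBinomialSeries, ← coeff_zero_eq_constantCoeff_apply, coeff_rescale,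
      coeff_zero_eq_constantCoeff_apply, constantCoeff_totalEGF h.total_zero]
    simp

theorem pow_div_factorial_mul_total (h : clusterRec p (daryWeight d) r b)
    (hα : (d - 1) * α = 1) {n : ℕ} (hn : n ≠ 0) :
    α ^ n / n.factorial * b n = Ring.multichoose α n := by
  rw [← coeff_negBinomialSeries, ← h.constantCoeff_subtreeSeries hα,
    h.constantCoeff_subtreeSeries_eq, map_add, coeff_rescale, totalEGF, coeff_mk, coeff_one,
    if_neg hn, zero_add, Algebra.algebraMap_self_apply]
  ring

theorem hasBivariateCoeffLimit_subtreeSeries {D : ℕ → ℝ} (h : clusterRec p (daryWeight d) r b)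
    (hα : (d - 1) * α = 1) (hp : 1 < p * d) (hD₁ : D 1 = 1 / (p * d - 1))
    (hD : ∀ k : ℕ, 2 ≤ k → (k - 1) * (p * d - 1) * D k =
      ∑ j ∈ Icc 2 (min k d), p ^ j * (d.factorial / (d - j).factorial : ℝ) * bellPartial k j D) :
    HasBivariateCoeffLimit α ((p * d - 1) * α) (subtreeSeries p α r b)
      (1 + p • bellSeries D) := by
  have hY₀ := h.constantCoeff_subtreeSeries hα
  obtain ⟨m, rfl⟩ : ∃ m, d = m + 1 := Nat.exists_eq_succ_of_ne_zero fun hd ↦ by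
    rw [hd, Nat.cast_zero, mul_zero] at hp
    linarith
  push_cast at hα hp hD₁ hD ⊢
  rw [add_sub_cancel_right] at hα
  have hα₀ : 0 < α := pos_of_mul_pos_right (by rw [hα]; exact one_pos) m.cast_nonneg
  have hβ : 0 < (p * (m + 1) - 1) * α := mul_pos (by linarith) hα₀
  have hp₀ : p * (m + 1) - 1 ≠ 0 := by linarith
  refine hasBivariateCoeffLimit_of_derivative_eq (E := exp ℝ) (q := p * α) hα (by ring) hα₀ hβ
    constantCoeff_exp hY₀ ?_ (fun k hk ↦ ?_) ?_ ?_ fun k hk ↦ ?_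
  · rw [coeff_subtreeSeries p α r b one_ne_zero, constantCoeff_smul,
      ← coeff_zero_eq_constantCoeff_apply, coeff_coeff_momentSeries]
    simp
  · rw [coeff_subtreeSeries p α r b hk, Derivation.map_smul, h.derivative_coeff_momentSeries,
      smul_smul]
  · simp [bellSeries]
  · rw [map_add, coeff_smul, coeff_bellSeries D one_ne_zero, hD₁, coeff_exp, coeff_one,
      if_neg one_ne_zero]
    simp only [Nat.factorial_one, Nat.cast_one, smul_eq_mul, zero_add, div_one, map_one, mul_one]
    field_simp
  · have hpow := coeff_one_add_smul_bellSeries_pow D p m.succ_ne_zero hk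
    push_cast at hpow
    rw [← hD k hk] at hpow
    rw [map_add, coeff_smul, coeff_bellSeries D (by omega : k ≠ 0), coeff_one,
      if_neg (by omega : k ≠ 0), zero_add, smul_eq_mul]
    field_simp
    linear_combination -p * hpow

theorem hasCoeffLimit_momentSeries {D : ℕ → ℝ} (h : clusterRec p (daryWeight d) r b)
    (hα : (d - 1) * α = 1) (hp : 1 < p * d) (hD₁ : D 1 = 1 / (p * d - 1))
    (hD : ∀ k : ℕ, 2 ≤ k → (k - 1) * (p * d - 1) * D k =
      ∑ j ∈ Icc 2 (min k d), p ^ j * (d.factorial / (d - j).factorial : ℝ) * bellPartial k j D)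
    {k : ℕ} (hk : k ≠ 0) :
    HasCoeffLimit (α + k * ((p * d - 1) * α)) (coeff k (momentSeries α r))
      (D k / k.factorial) := by
  have hp₀ : p ≠ 0 := by
    rintro rfl
    linarith
  have hY := (h.hasBivariateCoeffLimit_subtreeSeries hα hp hD₁ hD k).const_smul p⁻¹
  rwa [coeff_subtreeSeries p α r b hk, map_add, coeff_smul, coeff_bellSeries D hk, coeff_one,
    if_neg hk, zero_add, smul_eq_mul, inv_mul_cancel_left₀ hp₀, inv_smul_smul₀ hp₀] at hY

theorem tendsto_moment_div_rpow {a L : ℝ} {k : ℕ} (h : clusterRec p (daryWeight d) r b)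
    (hα : (d - 1) * α = 1) (hα₀ : 0 < α) (ha : 0 < a)
    (hmoment : HasCoeffLimit a (coeff k (momentSeries α r)) (L / k.factorial)) :
    Tendsto (fun n : ℕ ↦ (∑ j ∈ Icc 1 n, (j : ℝ) ^ k * r n j) / b n / (n : ℝ) ^ (a - α)) atTop
      (𝓝 (L * Real.Gamma α / Real.Gamma a)) := by
  have hratio := tendsto_multichoose_div_multichoose_div_rpow ha hα₀
  have hlim := (Tendsto.mul hmoment hratio).const_mul (k.factorial : ℝ)
  have := k.factorial_ne_zero
  convert hlim.congr' ?_ using 2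
  · field_simp
  filter_upwards [eventually_ne_atTop 0] with n hn
  have := multichoose_pos ha n
  rw [← h.pow_div_factorial_mul_total hα hn, coeff_coeff_momentSeries]
  field_simp

end clusterRec

end MomentSeries

end

theorem stmt13_general (d : ℕ) (hd : 2 ≤ d) (p : ℝ) (hp0 : 1 / (d : ℝ) < p)
    (r : ℕ → ℕ → ℝ) (b : ℕ → ℝ)
    (hrec : clusterRec p
      (fun δ => if δ ≤ d then ((d.factorial : ℝ) / ((d - δ).factorial : ℝ)) else 0) r b)
    (D : ℕ → ℝ) (hD1 : D 1 = 1 / (p * d - 1))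
    (hDk : ∀ k : ℕ, 2 ≤ k →
      ((k : ℝ) - 1) * (p * d - 1) * D k
        = ∑ j ∈ Finset.Icc 2 (min k d),
            p ^ j * ((d.factorial : ℝ) / ((d - j).factorial : ℝ)) * bellPartial k j D)
    (k : ℕ) (hk : 1 ≤ k) :
    Tendsto (fun n : ℕ =>
        ((∑ j ∈ Finset.Icc 1 n, (j : ℝ) ^ k * r n j) / b n)
          / (n : ℝ) ^ ((k : ℝ) * (p * d - 1) / ((d : ℝ) - 1)))
      atTop
      (nhds (D k * Real.Gamma (1 / ((d : ℝ) - 1))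
        / Real.Gamma (((k : ℝ) * p * d - (k : ℝ) + 1) / ((d : ℝ) - 1)))) := by
  have hd₁ : 0 < (d : ℝ) - 1 := by
    rw [sub_pos, Nat.one_lt_cast]
    omega
  have hp : 1 < p * d := by rwa [div_lt_iff₀ (by linarith)] at hp0
  have hargument : ((k : ℝ) * p * d - k + 1) / (d - 1) =
      1 / (d - 1) + k * ((p * d - 1) * (1 / (d - 1))) := by ring
  have hexponent : (k : ℝ) * (p * d - 1) / (d - 1) =
      (k * p * d - k + 1) / (d - 1) - 1 / (d - 1) := by ring
  have hpos : 0 < ((k : ℝ) * p * d - k + 1) / (d - 1) := by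
    have := sub_pos.2 hp
    rw [hargument]
    positivity
  have hα := mul_one_div_cancel hd₁.ne'
  have hmoment := clusterRec.hasCoeffLimit_momentSeries hrec hα hp hD1 hDk
    (Nat.one_le_iff_ne_zero.1 hk)
  rw [← hargument] at hmoment
  rw [hexponent]
  exact clusterRec.tendsto_moment_div_rpow hrec hα (one_div_pos.2 hd₁) hpos hmoment

/-- for random increasing `d`-ary trees with `1/d < p < 1`, the `k`-th
moment of the root-cluster size, normalized by `n^{k(pd-1)/(d-1)}`, converges to
`D_k Γ(1/(d-1)) / Γ((kpd-k+1)/(d-1))`. -/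
theorem stmt13 (d : ℕ) (hd : 2 ≤ d) (p : ℝ) (hp0 : 1 / (d : ℝ) < p) (hp1 : p < 1)
    (r : ℕ → ℕ → ℝ) (b : ℕ → ℝ)
    (hrec : clusterRec p
      (fun δ => if δ ≤ d then ((d.factorial : ℝ) / ((d - δ).factorial : ℝ)) else 0) r b)
    (D : ℕ → ℝ) (hD1 : D 1 = 1 / (p * d - 1))
    (hDk : ∀ k : ℕ, 2 ≤ k →
      ((k : ℝ) - 1) * (p * d - 1) * D k
        = ∑ j ∈ Finset.Icc 2 (min k d),
            p ^ j * ((d.factorial : ℝ) / ((d - j).factorial : ℝ)) * bellPartial k j D)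
    (k : ℕ) (hk : 1 ≤ k) :
    Tendsto (fun n : ℕ =>
        ((∑ j ∈ Finset.Icc 1 n, (j : ℝ) ^ k * r n j) / b n)
          / (n : ℝ) ^ ((k : ℝ) * (p * d - 1) / ((d : ℝ) - 1)))
      atTop
      (nhds (D k * Real.Gamma (1 / ((d : ℝ) - 1))
        / Real.Gamma (((k : ℝ) * p * d - (k : ℝ) + 1) / ((d : ℝ) - 1)))) :=
  stmt13_general d hd p hp0 r b hrec D hD1 hDk k hk
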